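/- Let Λ and Λ̂ be positive bounded self-adjoint operators on a Hilbert space and λ > 0. If ‖(Λ̂ − Λ)(Λ + λI)^{-1}‖ ≤ 1/2, then ‖(Λ + λI)(Λ̂ + λI)^{-1}‖ ≤ 2 and, for all l ∈ [0,1], ‖(Λ + λI)^l (Λ̂ + λI)^{-l}‖ ≤ 2^l. -/

import Mathlib

/-!
Write `X = Λ + λ` and `Y = Λ̂ + λ`. Since `X Y⁻¹ = 1 - X Y⁻¹ (Y - X) X⁻¹`, a bound `ε < 1` on
`‖(Y - X) X⁻¹‖` forces `‖X Y⁻¹‖ ≤ 1 / (1 - ε)`. The bound on powers is then the Cordes inequality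
`‖a ^ l * b ^ l‖ ≤ ‖a * b‖ ^ l`. After rescaling and, when `b` is not invertible, perturbing `b` to
`b + δ`, this says that `‖a * b‖ ≤ 1` implies `‖a ^ l * b ^ l‖ ≤ 1`; because `‖a * b‖ ≤ 1` means
`a² ≤ b⁻²`, it is operator monotonicity of `t ↦ t ^ l`.
-/

open Set
open scoped NNReal

section NormedRing

variable {A : Type*} [NormedRing A]

lemma norm_mul_inv_le_of_norm_sub_mul_inv_le {x y : Aˣ} {ε : ℝ} (hε : ε < 1)
    (h : ‖((y : A) - x) * ↑x⁻¹‖ ≤ ε) : ‖(x : A) * ↑y⁻¹‖ ≤ ‖(1 : A)‖ / (1 - ε) := by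
  have hxy : (x : A) * ↑y⁻¹ = 1 - x * ↑y⁻¹ * ((y - x) * ↑x⁻¹) := by
    simp [sub_mul, mul_sub, mul_assoc]
  have hle : ‖(x : A) * ↑y⁻¹‖ ≤ ‖(1 : A)‖ + ‖(x : A) * ↑y⁻¹‖ * ε :=
    calc ‖(x : A) * ↑y⁻¹‖ = ‖1 - (x : A) * ↑y⁻¹ * ((y - x) * ↑x⁻¹)‖ := congrArg norm hxy
      _ ≤ ‖(1 : A)‖ + ‖(x : A) * ↑y⁻¹ * ((y - x) * ↑x⁻¹)‖ := norm_sub_le _ _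
      _ ≤ ‖(1 : A)‖ + ‖(x : A) * ↑y⁻¹‖ * ε := by grw [norm_mul_le, h]
  rw [le_div_iff₀ (sub_pos.2 hε)]
  linarith

end NormedRing

section CStarAlgebra

variable {A : Type*} [CStarAlgebra A] [PartialOrder A] [StarOrderedRing A]

lemma norm_mul_le_one_iff_sq_le_inv_sq {a : A} {b : Aˣ} (ha : 0 ≤ a) (hb : 0 ≤ (b : A)) :
    ‖a * b‖ ≤ 1 ↔ a ^ 2 ≤ (↑b⁻¹ : A) ^ 2 := by
  have hb' : (0 : A) ≤ ↑b⁻¹ := CFC.inv_nonneg_of_nonneg b hb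
  have h := le_iff_norm_sqrt_mul_sqrt_inv (a := a ^ 2) (b := b⁻¹ ^ 2)
    ha.isSelfAdjoint.sq_nonneg (by simpa using hb'.isSelfAdjoint.sq_nonneg)
  simpa [CFC.sqrt_sq a, CFC.sqrt_sq (b : A)] using h.symm

lemma sq_rpow_eq_rpow_sq {a : A} (ha : 0 ≤ a) {l : ℝ} (hl : 0 ≤ l) :
    (a ^ 2) ^ l = (a ^ l) ^ 2 := by
  rw [← CFC.rpow_natCast a 2, ← CFC.rpow_natCast (a ^ l) 2,
    CFC.rpow_rpow_of_exponent_nonneg a _ _ (Nat.cast_nonneg 2) hl,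
    CFC.rpow_rpow_of_exponent_nonneg a _ _ hl (Nat.cast_nonneg 2), mul_comm]

lemma nnreal_smul_rpow {a : A} (ha : 0 ≤ a) (r : ℝ≥0) {l : ℝ} (hl : 0 ≤ l) :
    (r • a) ^ l = r ^ l • a ^ l := by
  have hcont : Continuous fun t : ℝ≥0 => t ^ l := NNReal.continuous_rpow_const hl
  rw [CFC.rpow_def, CFC.rpow_def, ← cfc_comp_smul r _ a hcont.continuousOn ha,
    ← cfc_smul _ _ a hcont.continuousOn]
  simp only [smul_eq_mul, NNReal.mul_rpow]

lemma continuousOn_rpow_of_exponent_nonneg {l : ℝ} (hl : 0 ≤ l) :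
    ContinuousOn (fun a : A => a ^ l) {a | 0 ≤ a} :=
  continuousOn_id.cfc_nnreal_of_mem_nhdsSet _ Filter.univ_mem (fun _ ha => ha)
    (NNReal.continuous_rpow_const hl).continuousOn

lemma norm_rpow_mul_units_rpow_le_one {a : A} {b : Aˣ} (ha : 0 ≤ a) (hb : 0 ≤ (b : A))
    (hab : ‖a * b‖ ≤ 1) {l : ℝ} (hl : l ∈ Icc 0 1) : ‖a ^ l * (b : A) ^ l‖ ≤ 1 := by
  have hb' : (0 : A) ≤ ↑b⁻¹ := CFC.inv_nonneg_of_nonneg b hb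
  have hinv : (↑(b.cfcRpow l)⁻¹ : A) = (↑b⁻¹ : A) ^ l := CFC.rpow_neg b l
  refine (norm_mul_le_one_iff_sq_le_inv_sq (b := b.cfcRpow l) CFC.rpow_nonneg
    CFC.rpow_nonneg).2 ?_
  rw [hinv, ← sq_rpow_eq_rpow_sq ha hl.1, ← sq_rpow_eq_rpow_sq hb' hl.1]
  exact CFC.rpow_le_rpow hl ((norm_mul_le_one_iff_sq_le_inv_sq ha hb).1 hab)

lemma norm_rpow_mul_units_rpow_le {a : A} {b : Aˣ} (ha : 0 ≤ a) (hb : 0 ≤ (b : A)) {c : ℝ}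
    (hc : 0 < c) (hab : ‖a * b‖ ≤ c) {l : ℝ} (hl : l ∈ Icc 0 1) :
    ‖a ^ l * (b : A) ^ l‖ ≤ c ^ l := by
  lift c to ℝ≥0 using hc.le
  have hnorm (r : ℝ≥0) (z : A) : ‖r⁻¹ • z‖ = ‖z‖ / r := by
    rw [NNReal.smul_def, norm_smul, NNReal.norm_eq, NNReal.coe_inv, inv_mul_eq_div]
  have hscaled : ‖(c⁻¹ • a) * b‖ ≤ 1 := by
    rw [smul_mul_assoc, hnorm]
    exact div_le_one_of_le₀ hab hc.le
  have h := norm_rpow_mul_units_rpow_le_one (smul_nonneg zero_le ha) hb hscaled hl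
  rwa [nnreal_smul_rpow ha _ hl.1, smul_mul_assoc, NNReal.inv_rpow, hnorm, NNReal.coe_rpow,
    div_le_one (Real.rpow_pos_of_pos hc l)] at h

theorem norm_rpow_mul_rpow_le_norm_mul_rpow {a b : A} (ha : 0 ≤ a) (hb : 0 ≤ b) {l : ℝ}
    (hl : l ∈ Icc 0 1) : ‖a ^ l * b ^ l‖ ≤ ‖a * b‖ ^ l := by
  have hshift {δ : ℝ} (hδ : 0 ≤ δ) : 0 ≤ b + δ • 1 :=
    add_nonneg hb (smul_nonneg hδ zero_le_one)
  -- Adding `δ` to the norm keeps the bound positive even when `a = 0`.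
  have hbound {δ : ℝ} (hδ : 0 < δ) :
      ‖a ^ l * (b + δ • 1) ^ l‖ ≤ (‖a * (b + δ • 1)‖ + δ) ^ l := by
    obtain ⟨u, hu⟩ : IsUnit (b + δ • 1) := ((isStrictlyPositive_one.smul hδ).nonneg_add hb).isUnit
    rw [← hu]
    exact norm_rpow_mul_units_rpow_le ha (hu ▸ hshift hδ.le) (by positivity)
      (le_add_of_nonneg_right hδ.le) hl
  have hcont : Continuous fun δ : ℝ => b + δ • (1 : A) := by fun_prop
  have hleft : ContinuousOn (fun δ : ℝ => ‖a ^ l * (b + δ • 1) ^ l‖) (Ici 0) :=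
    (continuousOn_const.mul ((continuousOn_rpow_of_exponent_nonneg hl.1).comp hcont.continuousOn
      fun _ => hshift)).norm
  have hright : Continuous fun δ : ℝ => (‖a * (b + δ • 1)‖ + δ) ^ l :=
    (((continuous_const.mul hcont).norm).add continuous_id).rpow_const fun _ => .inr hl.1
  have hlim := le_on_closure (s := Ioi (0 : ℝ)) (fun _ => hbound)
    (by rwa [closure_Ioi]) hright.continuousOn (by rw [closure_Ioi]; exact self_mem_Ici)
  simpa using hlim

theorem stmt_9_general (x y : Aˣ) (hx : 0 ≤ (x : A)) (hy : 0 ≤ (y : A)) {ε : ℝ} (hε : ε < 1)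
    (h : ‖((y : A) - x) * ↑x⁻¹‖ ≤ ε) :
    ‖(x : A) * ↑y⁻¹‖ ≤ (1 - ε)⁻¹ ∧
      ∀ l : ℝ, 0 ≤ l → l ≤ 1 →
        ‖cfc (fun t : ℝ => t ^ l) (x : A) * cfc (fun t : ℝ => t ^ l) (↑y⁻¹ : A)‖
          ≤ (1 - ε)⁻¹ ^ l := by
  have hy' : (0 : A) ≤ ↑y⁻¹ := CFC.inv_nonneg_of_nonneg y hy
  have hone : ‖(1 : A)‖ ≤ 1 := by nontriviality A; exact CStarRing.norm_one.le
  have hbound : ‖(x : A) * ↑y⁻¹‖ ≤ (1 - ε)⁻¹ :=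
    calc ‖(x : A) * ↑y⁻¹‖ ≤ ‖(1 : A)‖ / (1 - ε) := norm_mul_inv_le_of_norm_sub_mul_inv_le hε h
      _ ≤ 1 / (1 - ε) := div_le_div_of_nonneg_right hone (sub_pos.2 hε).le
      _ = (1 - ε)⁻¹ := one_div _
  refine ⟨hbound, fun l hl₀ hl₁ => ?_⟩
  rw [← CFC.rpow_eq_cfc_real hx, ← CFC.rpow_eq_cfc_real hy']
  calc ‖(x : A) ^ l * (↑y⁻¹ : A) ^ l‖
      ≤ ‖(x : A) * ↑y⁻¹‖ ^ l := norm_rpow_mul_rpow_le_norm_mul_rpow hx hy' ⟨hl₀, hl₁⟩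
    _ ≤ (1 - ε)⁻¹ ^ l := Real.rpow_le_rpow (norm_nonneg _) hbound hl₀

end CStarAlgebra

/-- If `Λ, Λ̂` are positive bounded self-adjoint operators, `λ > 0`,
`R = (Λ+λI)⁻¹`, `R̂ = (Λ̂+λI)⁻¹`, and `‖(Λ̂ − Λ)(Λ + λI)⁻¹‖ ≤ 1/2`, then
`‖(Λ + λI)(Λ̂ + λI)⁻¹‖ ≤ 2` and, for all `l ∈ [0,1]`,
`‖(Λ + λI)^l (Λ̂ + λI)^{-l}‖ ≤ 2^l` (powers via continuous functional calculus). -/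
theorem stmt_9 {H : Type*} [NormedAddCommGroup H] [InnerProductSpace ℂ H] [CompleteSpace H]
    [TopologicalSpace.SeparableSpace H]
    (Λ Λh R Rh : H →L[ℂ] H) (lam : ℝ) (hlam : 0 < lam)
    (hΛ : Λ.IsPositive) (hΛh : Λh.IsPositive)
    (hR1 : (Λ + (lam : ℂ) • 1) * R = 1) (hR2 : R * (Λ + (lam : ℂ) • 1) = 1)
    (hRh1 : (Λh + (lam : ℂ) • 1) * Rh = 1) (hRh2 : Rh * (Λh + (lam : ℂ) • 1) = 1)
    (hsmall : ‖(Λh - Λ) * R‖ ≤ 1 / 2) :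
    ‖(Λ + (lam : ℂ) • 1) * Rh‖ ≤ 2 ∧
      ∀ l : ℝ, 0 ≤ l → l ≤ 1 →
        ‖cfc (fun x : ℝ => x ^ l) (Λ + (lam : ℂ) • 1) * cfc (fun x : ℝ => x ^ l) Rh‖
          ≤ 2 ^ l := by
  have hpos {T : H →L[ℂ] H} (hT : T.IsPositive) : 0 ≤ T + (lam : ℂ) • 1 := by
    rw [Complex.coe_smul]
    exact add_nonneg (T.nonneg_iff_isPositive.2 hT) (smul_nonneg hlam.le zero_le_one)
  have h := stmt_9_general ⟨_, R, hR1, hR2⟩ ⟨_, Rh, hRh1, hRh2⟩ (hpos hΛ) (hpos hΛh)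
    one_half_lt_one (by simpa using hsmall)
  rwa [show ((1 : ℝ) - 1 / 2)⁻¹ = 2 by norm_num] at h
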